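/- Assume the late-expensive-obstacles assumption holds and D̂ is nonempty. Then there is exactly one (c*_1,…,c*_{ℓ−1}) ∈ D^c that minimizes Σ_{m=1}^ℓ (x_m^c + y_m^c) over D^c. It is given by c*_m = [(Σ_{i=1}^m a_i)(Σ_{i=m+1}^ℓ b_i) − (Σ_{i=1}^m b_i)(Σ_{i=m+1}^ℓ a_i)]/(Σ_{i=1}^ℓ b_i) · (f(c̃) − 1/(2f(c̃))) for m = 1,…,ℓ−1, and the corresponding optimal times are x_m^{c*} = a_m f(c̃) and y_m^{c*} = b_m (Σ_{i=1}^ℓ b_i)/(2(Σ_{i=1}^ℓ a_i)(f(c̃) − 1/(2f(c̃)))) for m = 1,…,ℓ. -/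

import Mathlib

open Finset

noncomputable section

/-- Membership in the domain `D` of the optimization problem. -/
def memD (ℓ : ℕ) (a b x y : ℕ → ℝ) : Prop :=
  (∀ i ∈ Finset.Icc 1 ℓ, 0 < x i ∧ 0 < y i) ∧
  (∑ i ∈ Finset.Icc 1 ℓ, (x i + y i)) ≤ 1 ∧
  (∀ m ∈ Finset.Icc 1 ℓ,
    0 ≤ ∑ i ∈ Finset.Icc 1 m, (x i - (a i) ^ 2 / (2 * x i) - (b i) ^ 2 / (2 * y i)))

/-- Membership in the domain `D̂`: elements of `D` where the cumulative condition holds with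
equality for `m = ℓ`. -/
def memDhat (ℓ : ℕ) (a b x y : ℕ → ℝ) : Prop :=
  memD ℓ a b x y ∧
  (∑ i ∈ Finset.Icc 1 ℓ, (x i - (a i) ^ 2 / (2 * x i) - (b i) ^ 2 / (2 * y i))) = 0

/-- The convention `c_0 = c_ℓ = 0`. -/
def cbar (ℓ : ℕ) (c : ℕ → ℝ) (m : ℕ) : ℝ := if m = 0 ∨ m = ℓ then 0 else c m

/-- Membership in `D^m(c, c')`. -/
def memDm (a b : ℕ → ℝ) (N : ℝ) (m : ℕ) (c c' x y : ℝ) : Prop :=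
  0 < x ∧ 0 < y ∧ x + y ≤ N ∧ c + x - (a m) ^ 2 / (2 * x) - (b m) ^ 2 / (2 * y) = c'

/-- Membership in `D̃(c_1, …, c_{ℓ-1})`. -/
def memDtilde (ℓ : ℕ) (a b : ℕ → ℝ) (N : ℝ) (c x y : ℕ → ℝ) : Prop :=
  (∑ i ∈ Finset.Icc 1 ℓ, (x i + y i)) ≤ 1 ∧
  ∀ m ∈ Finset.Icc 1 ℓ, memDm a b N m (cbar ℓ c (m - 1)) (cbar ℓ c m) (x m) (y m)

/-- Membership in `D^c`. -/
def memDc (ℓ : ℕ) (a b : ℕ → ℝ) (N : ℝ) (c : ℕ → ℝ) : Prop :=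
  (∀ m ∈ Finset.Icc 1 (ℓ - 1), 0 ≤ c m) ∧ ∃ x y, memDtilde ℓ a b N c x y

/-- `(x, y)` minimizes `x + y` over `D^m(c, c')`. -/
def isArgminDm (a b : ℕ → ℝ) (N : ℝ) (m : ℕ) (c c' x y : ℝ) : Prop :=
  memDm a b N m c c' x y ∧ ∀ x' y' : ℝ, memDm a b N m c c' x' y' → x + y ≤ x' + y'

/-- The projection `D^m_x(c, C)` of `D^m(c, C)` to the first coordinate. -/
def Dmx (a b : ℕ → ℝ) (N : ℝ) (m : ℕ) (c C : ℝ) : Set ℝ :=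
  {x : ℝ | ∃ y : ℝ, memDm a b N m c C x y}

/-- The function `f(c̃) = sqrt((1 + c̃)/2 + sqrt(c̃²/4 + c̃))`. -/
def fval (c : ℝ) : ℝ := Real.sqrt ((1 + c) / 2 + Real.sqrt (c ^ 2 / 4 + c))

/-- `c̃ = (Σ b_i)² / (2 (Σ a_i)²)`. -/
def ctilde (ℓ : ℕ) (a b : ℕ → ℝ) : ℝ :=
  (∑ i ∈ Finset.Icc 1 ℓ, b i) ^ 2 / (2 * (∑ i ∈ Finset.Icc 1 ℓ, a i) ^ 2)

/-- The objective function `F` on `ℝ^{2ℓ}`. -/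
def Fobj (ℓ : ℕ) (a b x y : ℕ → ℝ) : ℝ :=
  (1 - ∑ i ∈ Finset.Icc 1 ℓ, (x i + y i)) *
  (1 - ∑ i ∈ Finset.Icc 1 ℓ, (y i + (a i) ^ 2 / (2 * x i) + (b i) ^ 2 / (2 * y i)))

/-- The late-expensive-obstacles assumption. -/
def LateExpensive (ℓ : ℕ) (a b : ℕ → ℝ) : Prop :=
  ∀ m, 1 ≤ m → m < ℓ →
    (∑ i ∈ Finset.Icc 1 m, b i) / (∑ i ∈ Finset.Icc 1 m, a i) <
      (∑ i ∈ Finset.Icc (m + 1) ℓ, b i) / (∑ i ∈ Finset.Icc (m + 1) ℓ, a i)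

/-- The ratio `(Σ_{j=p}^q b_j) / (Σ_{j=p}^q a_j)`. -/
def ratioBA (a b : ℕ → ℝ) (p q : ℕ) : ℝ :=
  (∑ j ∈ Finset.Icc p q, b j) / (∑ j ∈ Finset.Icc p q, a j)

/-- `u` (on indices `0, …, n+1`) is an admissible division into blocks. -/
def AdmissibleDiv (ℓ : ℕ) (a b : ℕ → ℝ) (n : ℕ) (u : ℕ → ℕ) : Prop :=
  u 0 = 0 ∧ u (n + 1) = ℓ ∧ (∀ i ≤ n, u i < u (i + 1)) ∧
  ∀ i ≤ n, ∀ m, u i < m → m < u (i + 1) →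
    ratioBA a b (u i + 1) m < ratioBA a b (m + 1) (u (i + 1))

/-- The canonical admissible division into blocks: the admissible division whose index
set is the intersection of the index sets of all admissible divisions into blocks. -/
def IsCanonicalDiv (ℓ : ℕ) (a b : ℕ → ℝ) (n : ℕ) (u : ℕ → ℕ) : Prop :=
  AdmissibleDiv ℓ a b n u ∧
  ∀ k, (∃ i ≤ n + 1, u i = k) ↔
    ∀ (n' : ℕ) (u' : ℕ → ℕ), AdmissibleDiv ℓ a b n' u' → ∃ i ≤ n' + 1, u' i = k

/-- The minimal time to cross one block with branching length `A` and obstacle length `B`. -/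
def blockTime (A B : ℝ) : ℝ :=
  A * fval (B ^ 2 / (2 * A ^ 2)) +
    B ^ 2 / (2 * A * (fval (B ^ 2 / (2 * A ^ 2)) - 1 / (2 * fval (B ^ 2 / (2 * A ^ 2)))))

/-- The total optimal time `T*` associated with a division into blocks. -/
def Tstar (a b : ℕ → ℝ) (n : ℕ) (u : ℕ → ℕ) : ℝ :=
  ∑ i ∈ Finset.range (n + 1),
    blockTime (∑ j ∈ Finset.Icc (u i + 1) (u (i + 1)), a j)
      (∑ j ∈ Finset.Icc (u i + 1) (u (i + 1)), b j)

/-- The coefficient appearing in the formula for the optimal `c_m`. -/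
def coefC (ℓ : ℕ) (a b : ℕ → ℝ) (m : ℕ) : ℝ :=
  ((∑ i ∈ Finset.Icc 1 m, a i) * (∑ i ∈ Finset.Icc (m + 1) ℓ, b i) -
    (∑ i ∈ Finset.Icc 1 m, b i) * (∑ i ∈ Finset.Icc (m + 1) ℓ, a i)) /
    (∑ i ∈ Finset.Icc 1 ℓ, b i)

/-!
Drop the constraints `c m ≥ 0`, keeping only that the total net gain is zero, and use the Lagrange
multiplier `2 * k ^ 2` for it. At a stationary pair `(f, k)` the Lagrangian of the times `(x, y)`
spent on one obstacle exceeds its value at `(a * f, b * k)` by a positive combination of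
`(x - a * f) ^ 2 / x` and `(y - b * k) ^ 2 / y`. Hence, among all times with at least the same total
net gain, the times `(a i * f, b i * k)` are the unique fastest ones. For `f = f(c̃)` there is a `k`
making the pair stationary with total net gain zero. The partial sums of the net gains are then the
claimed `c*`, and the late-expensive-obstacles assumption makes them nonnegative, so the dropped
constraints hold.
-/

/-- The increment of the parameter `c` over one obstacle `(a, b)` passed with times `(x, y)`. -/
def netGain (a b x y : ℝ) : ℝ := x - a ^ 2 / (2 * x) - b ^ 2 / (2 * y)

/-- The net gain per unit of `a` when the first time is `a * f`. -/
def netRate (f : ℝ) : ℝ := f - 1 / (2 * f)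

/-- The Lagrangian of minimizing the time `x + y` under a constraint on the net gain, with the
multiplier written as `2 * k ^ 2` so that stationarity in `y` reads `y = b * k`. -/
def lagrangian (k a b x y : ℝ) : ℝ := x + y - 2 * k ^ 2 * netGain a b x y

/-- The factors `f` and `k` for which `(a * f, b * k)` is a critical point of `lagrangian k a b`;
this condition does not involve `a` and `b`. -/
structure IsStationaryPair (f k : ℝ) : Prop where
  left_pos : 0 < f
  right_pos : 0 < k
  multiplier_eq : 2 * k ^ 2 * (1 + 1 / (2 * f ^ 2)) = 1

lemma netGain_mul_mul (f k a b : ℝ) :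
    netGain a b (a * f) (b * k) = a * netRate f - b / (2 * k) := by
  have sq_div_mul (u v : ℝ) : u ^ 2 / (2 * (u * v)) = u / (2 * v) := by
    rw [sq, mul_left_comm 2 u v]
    rcases eq_or_ne u 0 with rfl | hu
    · simp
    · exact mul_div_mul_left u (2 * v) hu
  rw [netGain, sq_div_mul, sq_div_mul, netRate]
  ring

lemma sum_lagrangian {ι : Type*} (k : ℝ) (s : Finset ι) (a b x y : ι → ℝ) :
    ∑ i ∈ s, lagrangian k (a i) (b i) (x i) (y i) =
      ∑ i ∈ s, (x i + y i) - 2 * k ^ 2 * ∑ i ∈ s, netGain (a i) (b i) (x i) (y i) := by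
  simp only [lagrangian, sum_sub_distrib, mul_sum]

namespace IsStationaryPair

variable {f k : ℝ}

lemma lagrangian_mul_mul (h : IsStationaryPair f k) (a b : ℝ) :
    lagrangian k a b (a * f) (b * k) = 2 * k ^ 2 * a / f + 2 * k * b := by
  have hf := h.left_pos
  have hk := h.right_pos
  have hmult := h.multiplier_eq
  rw [lagrangian, netGain_mul_mul, netRate]
  field_simp at hmult ⊢
  linear_combination (-a) * hmult

lemma lagrangian_eq_add_sq (h : IsStationaryPair f k) (a b : ℝ) {x y : ℝ} (hx : 0 < x)
    (hy : 0 < y) :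
    lagrangian k a b x y = lagrangian k a b (a * f) (b * k) +
      ((k / f) ^ 2 * (x - a * f) ^ 2 / x + (y - b * k) ^ 2 / y) := by
  have hf := h.left_pos
  have hmult := h.multiplier_eq
  rw [h.lagrangian_mul_mul, lagrangian, netGain]
  field_simp at hmult ⊢
  linear_combination (-(x ^ 2 * y)) * hmult

lemma lagrangian_mul_mul_le (h : IsStationaryPair f k) (a b : ℝ) {x y : ℝ} (hx : 0 < x)
    (hy : 0 < y) : lagrangian k a b (a * f) (b * k) ≤ lagrangian k a b x y := by
  rw [h.lagrangian_eq_add_sq a b hx hy]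
  exact le_add_of_nonneg_right (by positivity)

lemma eq_of_lagrangian_eq (h : IsStationaryPair f k) {a b x y : ℝ} (hx : 0 < x) (hy : 0 < y)
    (heq : lagrangian k a b (a * f) (b * k) = lagrangian k a b x y) :
    x = a * f ∧ y = b * k := by
  rw [h.lagrangian_eq_add_sq a b hx hy, left_eq_add,
    add_eq_zero_iff_of_nonneg (by positivity) (by positivity)] at heq
  simpa [hx.ne', hy.ne', h.left_pos.ne', h.right_pos.ne', sub_eq_zero] using heq

variable {ι : Type*} {s : Finset ι} {a b x y : ι → ℝ}

lemma sum_time_le (h : IsStationaryPair f k) (hpos : ∀ i ∈ s, 0 < x i ∧ 0 < y i)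
    (hgain : ∑ i ∈ s, netGain (a i) (b i) (a i * f) (b i * k) ≤
      ∑ i ∈ s, netGain (a i) (b i) (x i) (y i)) :
    ∑ i ∈ s, (a i * f + b i * k) ≤ ∑ i ∈ s, (x i + y i) := by
  have hlag := sum_le_sum fun i hi ↦
    h.lagrangian_mul_mul_le (a i) (b i) (hpos i hi).1 (hpos i hi).2
  rw [sum_lagrangian, sum_lagrangian] at hlag
  have hmul := mul_le_mul_of_nonneg_left hgain (by positivity : 0 ≤ 2 * k ^ 2)
  linarith

lemma eq_of_sum_time_le (h : IsStationaryPair f k) (hpos : ∀ i ∈ s, 0 < x i ∧ 0 < y i)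
    (hgain : ∑ i ∈ s, netGain (a i) (b i) (a i * f) (b i * k) ≤
      ∑ i ∈ s, netGain (a i) (b i) (x i) (y i))
    (htime : ∑ i ∈ s, (x i + y i) ≤ ∑ i ∈ s, (a i * f + b i * k)) :
    ∀ i ∈ s, x i = a i * f ∧ y i = b i * k := by
  have hterm : ∀ i ∈ s, lagrangian k (a i) (b i) (a i * f) (b i * k) ≤
      lagrangian k (a i) (b i) (x i) (y i) := fun i hi ↦
    h.lagrangian_mul_mul_le (a i) (b i) (hpos i hi).1 (hpos i hi).2
  have hsum : ∑ i ∈ s, lagrangian k (a i) (b i) (x i) (y i) ≤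
      ∑ i ∈ s, lagrangian k (a i) (b i) (a i * f) (b i * k) := by
    have hmul := mul_le_mul_of_nonneg_left hgain (by positivity : 0 ≤ 2 * k ^ 2)
    rw [sum_lagrangian, sum_lagrangian]
    linarith
  have heq := (sum_eq_sum_iff_of_le hterm).1 ((sum_le_sum hterm).antisymm hsum)
  exact fun i hi ↦ h.eq_of_lagrangian_eq (hpos i hi).1 (hpos i hi).2 (heq i hi)

end IsStationaryPair

lemma fval_sq {c : ℝ} (hc : 0 ≤ c) : fval c ^ 2 = (1 + c) / 2 + √(c ^ 2 / 4 + c) :=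
  Real.sq_sqrt (by positivity)

lemma fval_pos {c : ℝ} (hc : 0 ≤ c) : 0 < fval c :=
  Real.sqrt_pos.2 (by positivity)

lemma netRate_fval_pos {c : ℝ} (hc : 0 < c) : 0 < netRate (fval c) := by
  have hf := fval_pos hc.le
  have hsq : 1 / 2 < fval c ^ 2 := by
    rw [fval_sq hc.le]
    linarith [Real.sqrt_nonneg (c ^ 2 / 4 + c)]
  have hrate : netRate (fval c) = (fval c ^ 2 - 1 / 2) / fval c := by
    rw [netRate]
    field_simp
  rw [hrate]
  exact div_pos (sub_pos.2 hsq) hf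

lemma netRate_fval_sq {c : ℝ} (hc : 0 ≤ c) :
    netRate (fval c) ^ 2 = c * (1 + 1 / (2 * fval c ^ 2)) := by
  have hf := fval_pos hc
  have hsqrt : √(c ^ 2 / 4 + c) ^ 2 = c ^ 2 / 4 + c := Real.sq_sqrt (by positivity)
  have hquad : (fval c ^ 2) ^ 2 - (1 + c) * fval c ^ 2 + 1 / 4 - c / 2 = 0 := by
    rw [fval_sq hc]
    linear_combination hsqrt
  rw [netRate]
  field_simp
  linear_combination 4 * hquad

lemma isStationaryPair_fval {A B : ℝ} (hA : 0 < A) (hB : 0 < B) :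
    IsStationaryPair (fval (B ^ 2 / (2 * A ^ 2)))
      (B / (2 * A * netRate (fval (B ^ 2 / (2 * A ^ 2))))) := by
  have hc : 0 < B ^ 2 / (2 * A ^ 2) := by positivity
  have hrate := netRate_fval_pos hc
  refine ⟨fval_pos hc.le, by positivity, ?_⟩
  have hmult : 2 * (B / (2 * A * netRate (fval (B ^ 2 / (2 * A ^ 2))))) ^ 2 =
      B ^ 2 / (2 * A ^ 2) / netRate (fval (B ^ 2 / (2 * A ^ 2))) ^ 2 := by
    field_simp
  rw [hmult, div_mul_eq_mul_div, ← netRate_fval_sq hc.le, div_self (by positivity)]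

section Landscape

variable (ℓ : ℕ) (a b : ℕ → ℝ)

/-- The factor `k` of the optimal times `b m * k`, paired with `fval (ctilde ℓ a b)`. -/
def optFactor : ℝ :=
  (∑ i ∈ Icc 1 ℓ, b i) / (2 * (∑ i ∈ Icc 1 ℓ, a i) * netRate (fval (ctilde ℓ a b)))

/-- The optimal parameters `c*_m`. -/
def optC (m : ℕ) : ℝ := coefC ℓ a b m * netRate (fval (ctilde ℓ a b))

variable {ℓ a b}

lemma ctilde_pos (hA : 0 < ∑ i ∈ Icc 1 ℓ, a i) (hB : 0 < ∑ i ∈ Icc 1 ℓ, b i) :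
    0 < ctilde ℓ a b := by
  rw [ctilde]
  positivity

lemma isStationaryPair_optFactor (hA : 0 < ∑ i ∈ Icc 1 ℓ, a i) (hB : 0 < ∑ i ∈ Icc 1 ℓ, b i) :
    IsStationaryPair (fval (ctilde ℓ a b)) (optFactor ℓ a b) :=
  isStationaryPair_fval hA hB

lemma sum_Icc_add_sum_Icc {M : Type*} [AddCommMonoid M] {m : ℕ} (hm : m ≤ ℓ) (u : ℕ → M) :
    ∑ i ∈ Icc 1 m, u i + ∑ i ∈ Icc (m + 1) ℓ, u i = ∑ i ∈ Icc 1 ℓ, u i := by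
  simpa only [← Icc_add_one_left_eq_Ioc, zero_add] using
    sum_Ioc_consecutive u (Nat.zero_le m) hm

lemma coefC_eq {m : ℕ} (hm : m ≤ ℓ) :
    coefC ℓ a b m = ((∑ i ∈ Icc 1 m, a i) * (∑ i ∈ Icc 1 ℓ, b i) -
      (∑ i ∈ Icc 1 m, b i) * (∑ i ∈ Icc 1 ℓ, a i)) / ∑ i ∈ Icc 1 ℓ, b i := by
  rw [coefC]
  congr 1
  rw [← sum_Icc_add_sum_Icc hm a, ← sum_Icc_add_sum_Icc hm b]
  ring

lemma LateExpensive.coefC_pos (hlate : LateExpensive ℓ a b)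
    (ha : ∀ i ∈ Icc 1 ℓ, 0 < a i) (hb : ∀ i ∈ Icc 1 ℓ, 0 < b i) {m : ℕ} (hm : 1 ≤ m)
    (hmℓ : m < ℓ) : 0 < coefC ℓ a b m := by
  have hinit : 0 < ∑ i ∈ Icc 1 m, a i :=
    sum_pos (fun i hi ↦ ha i (Icc_subset_Icc_right hmℓ.le hi)) (nonempty_Icc.2 hm)
  have htail : 0 < ∑ i ∈ Icc (m + 1) ℓ, a i :=
    sum_pos (fun i hi ↦ ha i (Icc_subset_Icc_left (by lia) hi)) (nonempty_Icc.2 hmℓ)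
  have hcross := (div_lt_div_iff₀ hinit htail).1 (hlate m hm hmℓ)
  exact div_pos (by linarith) (sum_pos hb (nonempty_Icc.2 (hm.trans hmℓ.le)))

lemma optC_self : optC ℓ a b ℓ = 0 := by simp [optC, coefC]

lemma cbar_optC (m : ℕ) : cbar ℓ (optC ℓ a b) m = optC ℓ a b m := by
  rw [cbar]
  split_ifs with h
  · rcases h with rfl | rfl <;> simp [optC, coefC]
  · rfl

lemma sum_netGain_opt (hA : 0 < ∑ i ∈ Icc 1 ℓ, a i) (hB : 0 < ∑ i ∈ Icc 1 ℓ, b i) {m : ℕ}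
    (hm : m ≤ ℓ) :
    ∑ i ∈ Icc 1 m, netGain (a i) (b i) (a i * fval (ctilde ℓ a b)) (b i * optFactor ℓ a b) =
      optC ℓ a b m := by
  have hrate : 0 < netRate (fval (ctilde ℓ a b)) :=
    netRate_fval_pos (ctilde_pos hA hB)
  simp only [netGain_mul_mul, sum_sub_distrib, ← sum_mul, ← sum_div]
  rw [optC, coefC_eq hm, optFactor]
  field_simp

lemma sum_opt_le (hA : 0 < ∑ i ∈ Icc 1 ℓ, a i) (hB : 0 < ∑ i ∈ Icc 1 ℓ, b i) {x y : ℕ → ℝ}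
    (hpos : ∀ i ∈ Icc 1 ℓ, 0 < x i ∧ 0 < y i)
    (hgain : 0 ≤ ∑ i ∈ Icc 1 ℓ, netGain (a i) (b i) (x i) (y i)) :
    ∑ i ∈ Icc 1 ℓ, (a i * fval (ctilde ℓ a b) + b i * optFactor ℓ a b) ≤
      ∑ i ∈ Icc 1 ℓ, (x i + y i) :=
  (isStationaryPair_optFactor hA hB).sum_time_le hpos <| by
    rwa [sum_netGain_opt hA hB le_rfl, optC_self]

lemma memDtilde_opt {N : ℝ} (hN : 1 ≤ N) (ha : ∀ i ∈ Icc 1 ℓ, 0 < a i)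
    (hb : ∀ i ∈ Icc 1 ℓ, 0 < b i)
    (htime : ∑ i ∈ Icc 1 ℓ, (a i * fval (ctilde ℓ a b) + b i * optFactor ℓ a b) ≤ 1) :
    memDtilde ℓ a b N (optC ℓ a b) (fun m ↦ a m * fval (ctilde ℓ a b))
      (fun m ↦ b m * optFactor ℓ a b) := by
  refine ⟨htime, fun m hm ↦ ?_⟩
  have hA := sum_pos ha ⟨m, hm⟩
  have hB := sum_pos hb ⟨m, hm⟩
  have hstat := isStationaryPair_optFactor hA hB
  have hx : ∀ i ∈ Icc 1 ℓ, 0 < a i * fval (ctilde ℓ a b) := fun i hi ↦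
    mul_pos (ha i hi) hstat.left_pos
  have hy : ∀ i ∈ Icc 1 ℓ, 0 < b i * optFactor ℓ a b := fun i hi ↦
    mul_pos (hb i hi) hstat.right_pos
  refine ⟨hx m hm, hy m hm, ?_, ?_⟩
  · calc a m * fval (ctilde ℓ a b) + b m * optFactor ℓ a b
        ≤ ∑ i ∈ Icc 1 ℓ, (a i * fval (ctilde ℓ a b) + b i * optFactor ℓ a b) :=
          single_le_sum (f := fun i ↦ a i * fval (ctilde ℓ a b) + b i * optFactor ℓ a b)
            (fun i hi ↦ (add_pos (hx i hi) (hy i hi)).le) hm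
      _ ≤ N := htime.trans hN
  · obtain ⟨hm1, hmℓ⟩ := mem_Icc.1 hm
    obtain ⟨n, rfl⟩ := Nat.exists_eq_add_of_le' hm1
    rw [cbar_optC, cbar_optC, Nat.add_sub_cancel, ← sum_netGain_opt hA hB hmℓ,
      sum_Icc_succ_top hm1, sum_netGain_opt hA hB (by lia), netGain]
    ring

end Landscape

namespace memDtilde

variable {ℓ : ℕ} {a b c x y : ℕ → ℝ} {N : ℝ}

lemma pos (h : memDtilde ℓ a b N c x y) : ∀ i ∈ Icc 1 ℓ, 0 < x i ∧ 0 < y i := fun i hi ↦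
  ⟨(h.2 i hi).1, (h.2 i hi).2.1⟩

lemma sum_netGain_eq_cbar (h : memDtilde ℓ a b N c x y) {n : ℕ} (hn : n ≤ ℓ) :
    ∑ i ∈ Icc 1 n, netGain (a i) (b i) (x i) (y i) = cbar ℓ c n := by
  induction n with
  | zero => simp [cbar]
  | succ n ih =>
    have hstep := (h.2 (n + 1) (mem_Icc.2 ⟨by lia, hn⟩)).2.2.2
    rw [sum_Icc_succ_top (by lia), ih (by lia), netGain, ← hstep, Nat.add_sub_cancel]
    ring

lemma sum_netGain_eq_zero (h : memDtilde ℓ a b N c x y) :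
    ∑ i ∈ Icc 1 ℓ, netGain (a i) (b i) (x i) (y i) = 0 := by
  simp [h.sum_netGain_eq_cbar le_rfl, cbar]

lemma eq_opt_of_sum_le (h : memDtilde ℓ a b N c x y) (hA : 0 < ∑ i ∈ Icc 1 ℓ, a i)
    (hB : 0 < ∑ i ∈ Icc 1 ℓ, b i)
    (htime : ∑ i ∈ Icc 1 ℓ, (x i + y i) ≤
      ∑ i ∈ Icc 1 ℓ, (a i * fval (ctilde ℓ a b) + b i * optFactor ℓ a b)) :
    ∀ i ∈ Icc 1 ℓ, x i = a i * fval (ctilde ℓ a b) ∧ y i = b i * optFactor ℓ a b := by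
  refine (isStationaryPair_optFactor hA hB).eq_of_sum_time_le h.pos ?_ htime
  rw [sum_netGain_opt hA hB le_rfl, optC_self, h.sum_netGain_eq_zero]

lemma eq_optC_of_sum_le (h : memDtilde ℓ a b N c x y) (hA : 0 < ∑ i ∈ Icc 1 ℓ, a i)
    (hB : 0 < ∑ i ∈ Icc 1 ℓ, b i)
    (htime : ∑ i ∈ Icc 1 ℓ, (x i + y i) ≤
      ∑ i ∈ Icc 1 ℓ, (a i * fval (ctilde ℓ a b) + b i * optFactor ℓ a b))
    {m : ℕ} (hm : m ∈ Icc 1 (ℓ - 1)) : c m = optC ℓ a b m := by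
  obtain ⟨hm1, hmℓ⟩ := mem_Icc.1 hm
  have htimes := h.eq_opt_of_sum_le hA hB htime
  calc c m = cbar ℓ c m := by rw [cbar, if_neg (by lia)]
    _ = ∑ i ∈ Icc 1 m, netGain (a i) (b i) (x i) (y i) :=
        (h.sum_netGain_eq_cbar (by lia)).symm
    _ = ∑ i ∈ Icc 1 m,
          netGain (a i) (b i) (a i * fval (ctilde ℓ a b)) (b i * optFactor ℓ a b) := by
        refine sum_congr rfl fun i hi ↦ ?_
        obtain ⟨hx, hy⟩ := htimes i (Icc_subset_Icc_right (by lia) hi)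
        rw [hx, hy]
    _ = optC ℓ a b m := sum_netGain_opt hA hB (by lia)

end memDtilde

lemma memDc.memDtilde_of_isArgminDm {ℓ : ℕ} {a b c x y : ℕ → ℝ} {N : ℝ}
    (hc : memDc ℓ a b N c)
    (hmin : ∀ m ∈ Icc 1 ℓ, isArgminDm a b N m (cbar ℓ c (m - 1)) (cbar ℓ c m) (x m) (y m)) :
    memDtilde ℓ a b N c x y := by
  obtain ⟨-, x', y', htime, hmem⟩ := hc
  exact ⟨(sum_le_sum fun m hm ↦ (hmin m hm).2 _ _ (hmem m hm)).trans htime,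
    fun m hm ↦ (hmin m hm).1⟩

lemma memDc_optC {ℓ : ℕ} {a b : ℕ → ℝ} {N : ℝ} (hlate : LateExpensive ℓ a b)
    (ha : ∀ i ∈ Icc 1 ℓ, 0 < a i) (hb : ∀ i ∈ Icc 1 ℓ, 0 < b i)
    (hopt : memDtilde ℓ a b N (optC ℓ a b) (fun m ↦ a m * fval (ctilde ℓ a b))
      (fun m ↦ b m * optFactor ℓ a b)) :
    memDc ℓ a b N (optC ℓ a b) := by
  refine ⟨fun m hm ↦ ?_, _, _, hopt⟩
  obtain ⟨hm1, hmℓ⟩ := mem_Icc.1 hm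
  have hne : (Icc 1 ℓ).Nonempty := nonempty_Icc.2 (by lia)
  exact mul_nonneg (hlate.coefC_pos ha hb hm1 (by lia)).le
    (netRate_fval_pos (ctilde_pos (sum_pos ha hne) (sum_pos hb hne))).le

/-- Under the late-expensive-obstacles assumption, if `D̂` is nonempty, there is
exactly one minimizer `(c*_1,…,c*_{ℓ−1}) ∈ D^c` of `Σ_m (x_m^c + y_m^c)`, given by the
explicit formula, with the corresponding optimal times `x_m^{c*} = a_m f(c̃)` and
`y_m^{c*} = b_m (Σ b_i) / (2 (Σ a_i)(f(c̃) − 1/(2 f(c̃))))`. -/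
theorem optimal_c_late_expensive (ℓ : ℕ) (hℓ : 1 ≤ ℓ) (a b : ℕ → ℝ)
    (ha : ∀ i ∈ Finset.Icc 1 ℓ, 0 < a i) (hb : ∀ i ∈ Finset.Icc 1 ℓ, 0 < b i)
    (N : ℝ) (hN : 1 < N)
    (hlate : LateExpensive ℓ a b)
    (hDhat : ∃ x y : ℕ → ℝ, memDhat ℓ a b x y)
    (xc yc : (ℕ → ℝ) → ℕ → ℝ)
    (hxcyc : ∀ c : ℕ → ℝ, memDc ℓ a b N c → ∀ m ∈ Finset.Icc 1 ℓ,
      isArgminDm a b N m (cbar ℓ c (m - 1)) (cbar ℓ c m) (xc c m) (yc c m)) :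
    ∃ cs : ℕ → ℝ, memDc ℓ a b N cs ∧
      (∀ c' : ℕ → ℝ, memDc ℓ a b N c' →
        (∑ m ∈ Finset.Icc 1 ℓ, (xc cs m + yc cs m)) ≤
          ∑ m ∈ Finset.Icc 1 ℓ, (xc c' m + yc c' m)) ∧
      (∀ c' : ℕ → ℝ, memDc ℓ a b N c' →
        (∀ c'' : ℕ → ℝ, memDc ℓ a b N c'' →
          (∑ m ∈ Finset.Icc 1 ℓ, (xc c' m + yc c' m)) ≤
            ∑ m ∈ Finset.Icc 1 ℓ, (xc c'' m + yc c'' m)) →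
        ∀ m ∈ Finset.Icc 1 (ℓ - 1), c' m = cs m) ∧
      (∀ m ∈ Finset.Icc 1 (ℓ - 1),
        cs m = coefC ℓ a b m * (fval (ctilde ℓ a b) - 1 / (2 * fval (ctilde ℓ a b)))) ∧
      (∀ m ∈ Finset.Icc 1 ℓ,
        xc cs m = a m * fval (ctilde ℓ a b) ∧
        yc cs m = b m * (∑ i ∈ Finset.Icc 1 ℓ, b i) /
          (2 * (∑ i ∈ Finset.Icc 1 ℓ, a i) *
            (fval (ctilde ℓ a b) - 1 / (2 * fval (ctilde ℓ a b))))) := by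
  have hA := sum_pos ha (nonempty_Icc.2 hℓ)
  have hB := sum_pos hb (nonempty_Icc.2 hℓ)
  obtain ⟨x, y, ⟨hpos, htime, -⟩, hgain⟩ := hDhat
  have hopt := memDtilde_opt hN.le ha hb ((sum_opt_le hA hB hpos hgain.ge).trans htime)
  have hoptDc := memDc_optC hlate ha hb hopt
  have hmem : ∀ c, memDc ℓ a b N c → memDtilde ℓ a b N c (xc c) (yc c) := fun c hc ↦
    hc.memDtilde_of_isArgminDm (hxcyc c hc)
  have hoptTime : ∑ m ∈ Icc 1 ℓ, (xc (optC ℓ a b) m + yc (optC ℓ a b) m) ≤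
      ∑ m ∈ Icc 1 ℓ, (a m * fval (ctilde ℓ a b) + b m * optFactor ℓ a b) :=
    sum_le_sum fun m hm ↦ (hxcyc _ hoptDc m hm).2 _ _ (hopt.2 m hm)
  refine ⟨optC ℓ a b, hoptDc, fun c hc ↦ ?_, fun c hc hmin m hm ↦ ?_, fun _ _ ↦ rfl,
    fun m hm ↦ ?_⟩
  · exact hoptTime.trans (sum_opt_le hA hB (hmem c hc).pos (hmem c hc).sum_netGain_eq_zero.ge)
  · exact (hmem c hc).eq_optC_of_sum_le hA hB ((hmin _ hoptDc).trans hoptTime) hm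
  · obtain ⟨hx, hy⟩ := (hmem _ hoptDc).eq_opt_of_sum_le hA hB hoptTime m hm
    exact ⟨hx, hy.trans (mul_div_assoc _ _ _).symm⟩
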